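/- arXiv:2208.04576 — 2 statements merged into one kernel-verified Lean document; each statement's English description precedes it below -/
import Mathlib

section
/- Fix an integer b ≥ 2 and γ ∈ (0,1), and let φ be a real analytic ℤ-periodic function. Let t ∈ ℤ₊, Δ₁ > 0, x₀ ∈ [0,1), and a, h, h' ∈ Λ^t be such that for every z ∈ I_a and all words i, j ∈ Λ^# with h a prefix of i and h' a prefix of j: |S'(z,i)| > Δ₁, |S'(z,j)| > Δ₁, and |S'(z,i) − S'(z,j)| > Δ₁. Then there exists R > 0 such that the following holds for all positive integers n, i with n̂ > t: for all u, v ∈ Λ^{n̂−t} such that ua and va lie in the same element of the partition L_i^{Λ#}, for every word q ∈ Λ^{î}, and for all sequences j, i' ∈ Σ, one has |S(x₀, u a q j) − S(x₀, v a q i')| ≤ R · b^{−(n+i)}. -/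
/-!
For a finite word `w` the series splits as `S(x, wj) = S(x, w) + γ^|w| S(w(x), j)`. Applied to
`w = ua`, `w' = va` followed by `qj`, `qi'`, this reduces the claim to three estimates.

* `S(x₀, w)` and `S(x₀, w')` share a `b`-adic interval of level `i + ⌊|w| log_b (1/γ)⌋`, whose
  length is at most `b · b^{-i} γ^|w| ≤ b · b^{-(n+i)}`.
* Both `w(x₀)` and `w'(x₀)` lie in the interval `I_a`, where the derivative of `S(·, h)` exceeds
  `Δ₁` in absolute value; since `S(w(x₀), h)` and `S(w'(x₀), h)` are `b^{-i}`-close, the mean value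
  theorem gives `|w(x₀) - w'(x₀)| ≤ b^{-i} / Δ₁` (`abs_sub_le_of_deriv`). The functions `S(·, q)`
  are Lipschitz uniformly in `q` (`Sfin_lip`), so `S(w(x₀), q)` and `S(w'(x₀), q)` are
  `O(b^{-i})`-close.
* The tails beyond `q` carry the factor `γ^î ≤ b^{-i}` and `S` is bounded (`S_bound`).

The last two contributions are multiplied by `γ^|w| = γ^n̂ ≤ b^{-n}`.
-/

open MeasureTheory Set Filter
open scoped ENNReal NNReal Topology

namespace Skew

noncomputable section

variable (b : ℕ) (γ : ℝ) (φ : ℝ → ℝ)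

/-- `j₁ + j₂ b + ⋯ + jₙ b^{n-1}`, the integer part determined by the first `n`
digits of the sequence `j`. -/
def sval (j : ℕ → Fin b) (n : ℕ) : ℕ := ∑ k ∈ Finset.range n, (j k).val * b ^ k

/-- `S(x,j) = Σ_{n≥1} γ^{n-1} φ((x + j₁ + j₂ b + ⋯ + jₙ b^{n-1})/bⁿ)` for an infinite
sequence `j ∈ Σ = Λ^{ℤ₊}`. -/
def S (x : ℝ) (j : ℕ → Fin b) : ℝ :=
  ∑' n : ℕ, γ ^ n * φ ((x + sval b j (n + 1)) / (b : ℝ) ^ (n + 1))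

/-- value of a finite word: first letter has weight `b^0`. -/
def lval : List (Fin b) → ℕ
  | [] => 0
  | a :: w => a.val + b * lval w

/-- `S(x,w)` for a finite word `w ∈ Λ^#`. -/
def Sfin (x : ℝ) (w : List (Fin b)) : ℝ :=
  ∑ n ∈ Finset.range w.length, γ ^ n * φ ((x + lval b (w.take (n + 1))) / (b : ℝ) ^ (n + 1))

/-- concatenation of a finite word with an infinite sequence. -/
def cat (w : List (Fin b)) (j : ℕ → Fin b) : ℕ → Fin b :=
  fun n => if h : n < w.length then w.get ⟨n, h⟩ else j (n - w.length)

/-- `w(x) = (x + w₁ + w₂ b + ⋯ + wₙ b^{n-1})/bⁿ`. -/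
def pt (w : List (Fin b)) (x : ℝ) : ℝ := (x + lval b w) / (b : ℝ) ^ w.length

/-- the `b`-adic interval `I_w = [w(0), w(0) + b^{-|w|})`. -/
def Iword (w : List (Fin b)) : Set ℝ :=
  Ico (pt b w 0) (pt b w 0 + ((b : ℝ) ^ w.length)⁻¹)

/-- value of a word given as a function `Fin n → Fin b`. -/
def fval {n : ℕ} (w : Fin n → Fin b) : ℕ := ∑ k : Fin n, (w k).val * b ^ (k : ℕ)

/-- `w(x)` for a word given as a function `Fin n → Fin b`. -/
def fpt {n : ℕ} (w : Fin n → Fin b) (x : ℝ) : ℝ := (x + fval b w) / (b : ℝ) ^ n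

/-- `ν` is the Bernoulli product measure `ν^{ℤ₊}` of uniform measures on `Λ = Fin b`:
a probability measure giving each cylinder of length `n` measure `b^{-n}`.  (These
conditions determine the measure uniquely.) -/
def IsBernoulli (ν : Measure (ℕ → Fin b)) : Prop :=
  IsProbabilityMeasure ν ∧
    ∀ (n : ℕ) (w : Fin n → Fin b), ν {j | ∀ k : Fin n, j k = w k} = ((b : ℝ≥0∞) ^ n)⁻¹

/-- the measure `m_x`, pushforward of `ν^{ℤ₊}` under `j ↦ S(x,j)`. -/
def mMeas (ν : Measure (ℕ → Fin b)) (x : ℝ) : Measure ℝ := ν.map (S b γ φ x)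

/-- the SRB measure `ω`: pushforward of `Leb|_{[0,1)} × ν^{ℤ₊}` under `(x,j) ↦ (x, S(x,j))`. -/
def srb (ν : Measure (ℕ → Fin b)) : Measure (ℝ × ℝ) :=
  ((volume.restrict (Ico (0 : ℝ) 1)).prod ν).map fun p => (p.1, S b γ φ p.1 p.2)

/-- the attractor `F^φ_{b,γ}`, closure of `{(x, S(x,j)) : x ∈ [0,1), j ∈ Σ}`. -/
def attractor : Set (ℝ × ℝ) :=
  closure {p | ∃ x ∈ Ico (0 : ℝ) 1, ∃ j : ℕ → Fin b, p = (x, S b γ φ x j)}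

/-- condition (H). -/
def CondH : Prop :=
  ∀ i j : ℕ → Fin b, i ≠ j → ∃ x ∈ Icc (0 : ℝ) 1, S b γ φ x i ≠ S b γ φ x j

/-- condition (H*). -/
def CondHstar : Prop :=
  ∀ i j : ℕ → Fin b, ∀ x ∈ Icc (0 : ℝ) 1, S b γ φ x i = S b γ φ x j

/-- a measure is exact dimensional with dimension `β`. -/
def IsExactDim {X : Type*} [MetricSpace X] [MeasurableSpace X] (μ : Measure X) (β : ℝ) : Prop :=
  ∀ᵐ z ∂μ, Tendsto (fun r : ℝ => Real.log (μ (Metric.closedBall z r)).toReal / Real.log r)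
    (nhdsWithin 0 (Ioi 0)) (nhds β)

/-- the `b`-adic interval of level `n` with index `j`. -/
def badicI (n : ℕ) (j : ℤ) : Set ℝ := Ico ((j : ℝ) / (b : ℝ) ^ n) ((j + 1 : ℝ) / (b : ℝ) ^ n)

/-- the entropy `H(μ, L_n)` (in base-`b` logarithm). -/
def entropy (μ : Measure ℝ) (n : ℕ) : ℝ :=
  (∑' j : ℤ, Real.negMulLog (μ (badicI b n j)).toReal) / Real.log b

/-- the `b`-adic interval of level `n` containing `x`. -/
def badicAt (n : ℕ) (x : ℝ) : Set ℝ := badicI b n ⌊x * (b : ℝ) ^ n⌋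

/-- the component measure `μ_{x,n} = μ(· | L_n(x))`. -/
def component (μ : Measure ℝ) (n : ℕ) (x : ℝ) : Measure ℝ :=
  (μ (badicAt b n x))⁻¹ • μ.restrict (badicAt b n x)

/-- `μ` is `(h,δ,m)`-entropy porous from scale `n₁` to `n₂`. -/
def EntPorous (μ : Measure ℝ) (h δ : ℝ) (m n₁ n₂ : ℕ) : Prop :=
  (1 / (n₂ - n₁ + 1 : ℝ)) *
    ∑ i ∈ Finset.Icc n₁ n₂,
      (μ {x | (1 / m : ℝ) * entropy b (component b μ i x) (i + m) < h + δ}).toReal > 1 - δ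

/-- `s` and `t` lie in the same `b`-adic interval of level `n`. -/
def sameBadic (n : ℕ) (s t : ℝ) : Prop := ⌊s * (b : ℝ) ^ n⌋ = ⌊t * (b : ℝ) ^ n⌋

/-- the words `w, w'` lie in the same element of the partition `L_i^{Λ#}` (depending on
the base point `x₀` and the words `h, h' ∈ Λᵗ`). -/
def sameCell (x₀ : ℝ) (hw h'w : List (Fin b)) (i : ℕ) (w w' : List (Fin b)) : Prop :=
  w.length = w'.length ∧
  sameBadic b i (Sfin b γ φ (pt b w x₀) hw) (Sfin b γ φ (pt b w' x₀) hw) ∧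
  sameBadic b i (Sfin b γ φ (pt b w x₀) h'w) (Sfin b γ φ (pt b w' x₀) h'w) ∧
  sameBadic b (i + ⌊(w.length : ℝ) * Real.logb b (1 / γ)⌋₊)
    (Sfin b γ φ x₀ w) (Sfin b γ φ x₀ w')
/-! ### Bounds for the periodic function -/

/-- A real analytic `ℤ`-periodic function is bounded and globally Lipschitz. -/
theorem periodic_bounds (φ : ℝ → ℝ) (hper : ∀ x : ℝ, φ (x + 1) = φ x)
    (hanal : ∀ x : ℝ, AnalyticAt ℝ φ x) :
    ∃ C : ℝ, 0 ≤ C ∧ (∀ x, |φ x| ≤ C) ∧ ∀ x y, |φ x - φ y| ≤ C * |x - y| := by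
  have bdd : ∀ f : ℝ → ℝ, (∀ x, f (x + 1) = f x) → Continuous f → ∃ C, ∀ x, |f x| ≤ C := by
    intro f hf hc
    have hp : Function.Periodic f 1 := hf
    obtain ⟨C, hC⟩ := (hp.isBounded_of_continuous one_ne_zero hc).exists_norm_le
    exact ⟨C, fun x => hC _ (mem_range_self x)⟩
  have hd : Differentiable ℝ φ := fun x => (hanal x).differentiableAt
  obtain ⟨C₁, h₁⟩ := bdd φ hper hd.continuous
  obtain ⟨C₂, h₂⟩ := bdd (deriv φ)
    (fun x => by
      rw [← deriv_comp_add_const]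
      congr 1
      funext y
      exact hper y)
    (continuous_iff_continuousAt.2 fun x => (hanal x).deriv.continuousAt)
  have h0 : 0 ≤ C₁ := (abs_nonneg _).trans (h₁ 0)
  refine ⟨max C₁ C₂, le_max_of_le_left h0, fun x => (h₁ x).trans (le_max_left _ _), fun x y => ?_⟩
  have := Convex.norm_image_sub_le_of_norm_deriv_le (f := φ) (C := max C₁ C₂) (s := univ)
    (fun x _ => hd x) (fun x _ => (h₂ x).trans (le_max_right _ _)) convex_univ
    (mem_univ y) (mem_univ x)
  simpa using this

/-! ### The inverse branches `w(x)` -/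

theorem pt_cons (b : ℕ) (hb : 2 ≤ b) (a : Fin b) (w : List (Fin b)) (x : ℝ) :
    pt b (a :: w) x = pt b w ((x + a.val) / b) := by
  have : (b : ℝ) ≠ 0 := by positivity
  simp only [pt, lval, List.length_cons]
  push_cast
  field_simp
  ring

theorem pt_append (b : ℕ) (hb : 2 ≤ b) (u w : List (Fin b)) (x : ℝ) :
    pt b (u ++ w) x = pt b w (pt b u x) := by
  induction u generalizing x with
  | nil => simp [pt, lval]
  | cons a u ih => rw [List.cons_append, pt_cons b hb, pt_cons b hb, ih]

theorem pt_mem_unit (b : ℕ) (hb : 2 ≤ b) (w : List (Fin b)) (x : ℝ) (hx : x ∈ Ico (0 : ℝ) 1) :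
    pt b w x ∈ Ico (0 : ℝ) 1 := by
  induction w generalizing x with
  | nil => simpa [pt, lval] using hx
  | cons a w ih =>
    rw [pt_cons b hb]
    have hb0 : (0 : ℝ) < b := by positivity
    have ha : (a.val : ℝ) + 1 ≤ b := by exact_mod_cast a.isLt
    refine ih _ ⟨div_nonneg (add_nonneg hx.1 (Nat.cast_nonneg _)) hb0.le, ?_⟩
    rw [div_lt_one hb0]
    linarith [hx.2]

theorem pt_mem_Iword (b : ℕ) (hb : 2 ≤ b) (w : List (Fin b)) (x : ℝ) (hx : x ∈ Ico (0 : ℝ) 1) :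
    pt b w x ∈ Iword b w := by
  have hp : (0 : ℝ) < (b : ℝ) ^ w.length := by positivity
  have : pt b w x = pt b w 0 + x * ((b : ℝ) ^ w.length)⁻¹ := by
    simp only [pt]
    field_simp
    ring
  have hi := inv_pos.2 hp
  rw [this]
  constructor
  · nlinarith [mul_nonneg hx.1 hi.le]
  · nlinarith [mul_lt_mul_of_pos_right hx.2 hi]

/-! ### Splitting and bounding the series `S` -/

theorem Sfin_cons (b : ℕ) (hb : 2 ≤ b) (γ : ℝ) (φ : ℝ → ℝ) (a : Fin b) (w : List (Fin b)) (x : ℝ) :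
    Sfin b γ φ x (a :: w) = φ ((x + a.val) / b) + γ * Sfin b γ φ ((x + a.val) / b) w := by
  have hb0 : (b : ℝ) ≠ 0 := by positivity
  simp only [Sfin, List.length_cons]
  rw [Finset.sum_range_succ', add_comm, Finset.mul_sum]
  congr 1
  · simp [lval]
  · refine Finset.sum_congr rfl fun n _ => ?_
    rw [pow_succ γ n, mul_comm (γ ^ n) γ, mul_assoc]
    congr 3
    simp only [List.take_succ_cons, lval]
    push_cast
    field_simp
    ring

theorem sval_succ (b : ℕ) (j : ℕ → Fin b) (n : ℕ) :
    sval b j (n + 1) = (j 0).val + b * sval b (fun k => j (k + 1)) n := by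
  simp only [sval]
  rw [Finset.sum_range_succ', Finset.mul_sum, add_comm]
  congr 1
  · simp
  · exact Finset.sum_congr rfl fun n _ => by ring

theorem S_summable (b : ℕ) (γ : ℝ) (hγ : γ ∈ Ioo (0 : ℝ) 1) (φ : ℝ → ℝ) (C : ℝ)
    (hC : ∀ x, |φ x| ≤ C) (x : ℝ) (j : ℕ → Fin b) :
    Summable fun n : ℕ => γ ^ n * φ ((x + sval b j (n + 1)) / (b : ℝ) ^ (n + 1)) := by
  refine Summable.of_norm_bounded
    ((summable_geometric_of_lt_one hγ.1.le hγ.2).mul_right C) fun n => ?_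
  rw [Real.norm_eq_abs, abs_mul, abs_of_pos (pow_pos hγ.1 n)]
  exact mul_le_mul_of_nonneg_left (hC _) (pow_pos hγ.1 n).le

theorem S_bound (b : ℕ) (γ : ℝ) (hγ : γ ∈ Ioo (0 : ℝ) 1) (φ : ℝ → ℝ) (C : ℝ)
    (hC : ∀ x, |φ x| ≤ C) (x : ℝ) (j : ℕ → Fin b) : |S b γ φ x j| ≤ C / (1 - γ) := by
  have h := (hasSum_geometric_of_lt_one hγ.1.le hγ.2).mul_right C
  rw [div_eq_inv_mul]
  refine tsum_of_norm_bounded (E := ℝ) h fun n => ?_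
  rw [Real.norm_eq_abs, abs_mul, abs_of_pos (pow_pos hγ.1 n)]
  exact mul_le_mul_of_nonneg_left (hC _) (pow_pos hγ.1 n).le

/-- The functional equation `S(x, j) = φ(y) + γ S(y, σj)` with `y = (x + j₁)/b`, where `σ` is the
left shift. -/
theorem S_shift (b : ℕ) (hb : 2 ≤ b) (γ : ℝ) (hγ : γ ∈ Ioo (0 : ℝ) 1) (φ : ℝ → ℝ) (C : ℝ)
    (hC : ∀ x, |φ x| ≤ C) (x : ℝ) (j : ℕ → Fin b) :
    S b γ φ x j = φ ((x + (j 0).val) / b)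
      + γ * S b γ φ ((x + (j 0).val) / b) (fun k => j (k + 1)) := by
  have hb0 : (b : ℝ) ≠ 0 := by positivity
  unfold S
  rw [(S_summable b γ hγ φ C hC x j).tsum_eq_zero_add, ← tsum_mul_left]
  congr 1
  · simp [sval]
  · refine tsum_congr fun n => ?_
    rw [pow_succ γ n, mul_comm (γ ^ n) γ, mul_assoc]
    congr 3
    rw [sval_succ b j (n + 1)]
    push_cast
    field_simp
    ring

theorem S_cat (b : ℕ) (hb : 2 ≤ b) (γ : ℝ) (hγ : γ ∈ Ioo (0 : ℝ) 1) (φ : ℝ → ℝ) (C : ℝ)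
    (hC : ∀ x, |φ x| ≤ C) (w : List (Fin b)) (x : ℝ) (j : ℕ → Fin b) :
    S b γ φ x (cat b w j) = Sfin b γ φ x w + γ ^ w.length * S b γ φ (pt b w x) j := by
  induction w generalizing x with
  | nil =>
    have : cat b [] j = j := by funext n; simp [cat]
    simp [this, Sfin, pt, lval]
  | cons a w ih =>
    have h0 : cat b (a :: w) j 0 = a := by simp [cat]
    have hs : (fun k => cat b (a :: w) j (k + 1)) = cat b w j := by
      funext n
      simp [cat]
    rw [S_shift b hb γ hγ φ C hC, h0, hs, ih, Sfin_cons b hb, pt_cons b hb, List.length_cons]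
    ring

theorem cat_append (b : ℕ) (w q : List (Fin b)) (j : ℕ → Fin b) :
    cat b (w ++ q) j = cat b w (cat b q j) := by
  funext n
  simp only [cat, List.length_append, List.get_eq_getElem]
  by_cases h : n < w.length
  · rw [dif_pos (by omega), dif_pos h, List.getElem_append_left h]
  · by_cases h2 : n - w.length < q.length
    · rw [dif_pos (by omega), dif_neg h, dif_pos h2, List.getElem_append_right (by omega)]
    · rw [dif_neg (by omega), dif_neg h, dif_neg h2, Nat.sub_add_eq]

/-! ### Regularity of `S(·, w)` -/

/-- The Lipschitz constant `C / (1 - γ)` of `S(·, w)` does not depend on the word `w`. -/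
theorem Sfin_lip (b : ℕ) (hb : 2 ≤ b) (γ : ℝ) (hγ : γ ∈ Ioo (0 : ℝ) 1) (φ : ℝ → ℝ) (C : ℝ)
    (hC0 : 0 ≤ C) (hC : ∀ x y, |φ x - φ y| ≤ C * |x - y|) (w : List (Fin b)) (x y : ℝ) :
    |Sfin b γ φ x w - Sfin b γ φ y w| ≤ C / (1 - γ) * |x - y| := by
  have h1 : 0 < 1 - γ := by linarith [hγ.2]
  induction w generalizing x y with
  | nil =>
    simp only [Sfin, List.length_nil, Finset.range_zero, Finset.sum_empty, sub_self,
      abs_zero]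
    positivity
  | cons a w ih =>
    rw [Sfin_cons b hb, Sfin_cons b hb]
    have hd : |(x + a.val) / b - (y + a.val) / b| ≤ |x - y| := by
      rw [← sub_div, add_sub_add_right_eq_sub, abs_div, Nat.abs_cast]
      exact div_le_self (abs_nonneg _) (by exact_mod_cast (by omega : 1 ≤ b))
    have e1 := (hC ((x + a.val) / b) ((y + a.val) / b)).trans (mul_le_mul_of_nonneg_left hd hC0)
    have e2 := (ih ((x + a.val) / b) ((y + a.val) / b)).trans
      (mul_le_mul_of_nonneg_left hd (by positivity))
    have e3 : C / (1 - γ) * |x - y| = C * |x - y| + γ * (C / (1 - γ) * |x - y|) := by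
      field_simp
      ring
    rw [e3, add_sub_add_comm, ← mul_sub]
    refine (abs_add_le _ _).trans (add_le_add e1 ?_)
    rw [abs_mul, abs_of_pos hγ.1]
    exact mul_le_mul_of_nonneg_left e2 hγ.1.le

theorem Sfin_differentiable (b : ℕ) (γ : ℝ) (φ : ℝ → ℝ) (hφ : Differentiable ℝ φ)
    (w : List (Fin b)) : Differentiable ℝ fun y => Sfin b γ φ y w := by
  unfold Sfin
  fun_prop

/-- A differentiable function whose derivative is at least `Δ` in absolute value on an interval
expands distances there by a factor of at least `Δ`. -/
theorem abs_sub_le_of_deriv (f : ℝ → ℝ) (hf : Differentiable ℝ f) (s : Set ℝ) (hs : s.OrdConnected)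
    (Δ : ℝ) (hΔ : ∀ z ∈ s, Δ < |deriv f z|) (x y : ℝ) (hx : x ∈ s) (hy : y ∈ s) :
    Δ * |x - y| ≤ |f x - f y| := by
  wlog hxy : x < y generalizing x y
  · rcases eq_or_lt_of_le (not_lt.1 hxy) with rfl | h
    · simp
    · rw [abs_sub_comm x, abs_sub_comm (f x)]
      exact this y x hy hx h
  obtain ⟨c, hc, he⟩ := exists_deriv_eq_slope f hxy hf.continuous.continuousOn
    hf.differentiableOn
  have hne : y - x ≠ 0 := by linarith
  have : f y - f x = deriv f c * (y - x) := by rw [he]; field_simp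
  rw [abs_sub_comm x, abs_sub_comm (f x), this, abs_mul]
  exact mul_le_mul_of_nonneg_right (hΔ c (hs.out hx hy ⟨hc.1.le, hc.2.le⟩)).le (abs_nonneg _)

/-! ### Lengths of `b`-adic intervals -/

theorem sameBadic_abs (b : ℕ) (hb : 2 ≤ b) (n : ℕ) (s t : ℝ) (h : sameBadic b n s t) :
    |s - t| ≤ ((b : ℝ) ^ n)⁻¹ := by
  have hp : (0 : ℝ) < (b : ℝ) ^ n := by positivity
  have := Int.abs_sub_lt_one_of_floor_eq_floor h
  rw [← sub_mul, abs_mul, abs_of_pos hp] at this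
  rw [← one_div, le_div_iff₀ hp]
  exact this.le

theorem level_bound (b : ℕ) (hb : 2 ≤ b) (γ : ℝ) (hγ : γ ∈ Ioo (0 : ℝ) 1) (i N : ℕ) :
    ((b : ℝ) ^ (i + ⌊(N : ℝ) * Real.logb b (1 / γ)⌋₊))⁻¹ ≤ b * ((b : ℝ) ^ i)⁻¹ * γ ^ N := by
  have hb0 : (0 : ℝ) < b := by positivity
  have hb1 : (1 : ℝ) < b := by exact_mod_cast (by omega : 1 < b)
  set m := ⌊(N : ℝ) * Real.logb b (1 / γ)⌋₊ with hm
  have hlt : (N : ℝ) * Real.logb b (1 / γ) < m + 1 := Nat.lt_floor_add_one _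
  have hpow : (1 / γ) ^ N ≤ (b : ℝ) ^ (m + 1) := by
    have hg : (0 : ℝ) < (1 / γ) ^ N := pow_pos (one_div_pos.2 hγ.1) N
    have := (Real.logb_le_iff_le_rpow hb1 hg (y := ((m + 1 : ℕ) : ℝ))).1
      (by rw [Real.logb_pow]; push_cast; exact hlt.le)
    rwa [Real.rpow_natCast] at this
  have hgN := pow_pos hγ.1 N
  rw [one_div, inv_pow, inv_le_iff_one_le_mul₀ hgN, pow_succ] at hpow
  have hbm : (0 : ℝ) < (b : ℝ) ^ m := by positivity
  have key : ((b : ℝ) ^ m)⁻¹ ≤ b * γ ^ N := by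
    rw [inv_le_iff_one_le_mul₀ hbm]
    nlinarith
  calc ((b : ℝ) ^ (i + m))⁻¹ = ((b : ℝ) ^ i)⁻¹ * ((b : ℝ) ^ m)⁻¹ := by rw [pow_add, mul_inv]
    _ ≤ ((b : ℝ) ^ i)⁻¹ * (b * γ ^ N) := mul_le_mul_of_nonneg_left key (by positivity)
    _ = _ := by ring

/-! ### Closeness of words in the same cell -/

/-- Words in the same cell of `L_i^{Λ#}` produce exponentially close values of `S`:
there is `R > 0` such that if `ua, va` lie in the same element of `L_i^{Λ#}` then
`|S(x₀, uaqj) − S(x₀, vaqi')| ≤ R b^{−(n+i)}`.  Here `hat n = n̂` is the unique integer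
with `γ^n̂ ≤ b^{-n} < γ^{n̂-1}`. -/
theorem same_cell_close (b : ℕ) (hb : 2 ≤ b) (γ : ℝ) (hγ : γ ∈ Ioo (0 : ℝ) 1)
    (φ : ℝ → ℝ) (hper : ∀ x : ℝ, φ (x + 1) = φ x) (hanal : ∀ x : ℝ, AnalyticAt ℝ φ x)
    (hat : ℕ → ℕ)
    (hhat : ∀ n : ℕ, 1 ≤ n →
      γ ^ hat n ≤ ((b : ℝ) ^ n)⁻¹ ∧ ((b : ℝ) ^ n)⁻¹ < γ ^ (hat n - 1))
    (t : ℕ) (ht : 0 < t) (Δ₁ : ℝ) (hΔ₁ : 0 < Δ₁) (x₀ : ℝ) (hx₀ : x₀ ∈ Ico (0 : ℝ) 1)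
    (aw hw h'w : List (Fin b)) (haw : aw.length = t) (hhw : hw.length = t)
    (hh'w : h'w.length = t)
    (htrans : ∀ z ∈ Iword b aw, ∀ i j : List (Fin b), hw <+: i → h'w <+: j →
      Δ₁ < |deriv (fun y => Sfin b γ φ y i) z| ∧
      Δ₁ < |deriv (fun y => Sfin b γ φ y j) z| ∧
      Δ₁ < |deriv (fun y => Sfin b γ φ y i) z - deriv (fun y => Sfin b γ φ y j) z|) :
    ∃ R : ℝ, 0 < R ∧
      ∀ n i : ℕ, 0 < n → 0 < i → t < hat n →
        ∀ u v : List (Fin b), u.length = hat n - t → v.length = hat n - t →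
          sameCell b γ φ x₀ hw h'w i (u ++ aw) (v ++ aw) →
          ∀ q : List (Fin b), q.length = hat i →
            ∀ jj ii : ℕ → Fin b,
              |S b γ φ x₀ (cat b (u ++ aw ++ q) jj) -
                 S b γ φ x₀ (cat b (v ++ aw ++ q) ii)| ≤ R * ((b : ℝ) ^ (n + i))⁻¹ := by
  obtain ⟨C, hC0, hC, hL⟩ := periodic_bounds φ hper hanal
  have hg1 : 0 < 1 - γ := by linarith [hγ.2]
  have hb0 : (0 : ℝ) < b := by positivity
  set K := C / (1 - γ) with hK
  have hK0 : 0 ≤ K := by positivity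
  -- The summands bound, in order, the heads `S(x₀, ua)`, the middle parts over `q`, and the tails.
  refine ⟨b + (K / Δ₁ + 2 * K), by positivity, ?_⟩
  intro n i hn hi htn u v hu hv hcell q hq jj ii
  obtain ⟨hlen, hc1, -, hc3⟩ := hcell
  have hlw : (u ++ aw).length = hat n := by rw [List.length_append]; omega
  have hlw' : (v ++ aw).length = hat n := by omega
  rw [hlw] at hc3
  have hmem : ∀ w, pt b (w ++ aw) x₀ ∈ Iword b aw := fun w => by
    rw [pt_append b hb]
    exact pt_mem_Iword b hb aw _ (pt_mem_unit b hb w x₀ hx₀)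
  have hdist := (abs_sub_le_of_deriv (fun y => Sfin b γ φ y hw)
    (Sfin_differentiable b γ φ (fun x => (hanal x).differentiableAt) hw) (Iword b aw)
    ordConnected_Ico Δ₁
    (fun z hz => (htrans z hz hw h'w (List.prefix_refl _) (List.prefix_refl _)).1)
    _ _ (hmem u) (hmem v)).trans (sameBadic_abs b hb i _ _ hc1)
  have hhead := (sameBadic_abs b hb _ _ _ hc3).trans (level_bound b hb γ hγ i (hat n))
  rw [cat_append, cat_append b (v ++ aw), S_cat b hb γ hγ φ C hC, S_cat b hb γ hγ φ C hC (v ++ aw),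
    S_cat b hb γ hγ φ C hC q, S_cat b hb γ hγ φ C hC q, hlw, hlw', hq]
  have hmid := Sfin_lip b hb γ hγ φ C hC0 hL q (pt b (u ++ aw) x₀) (pt b (v ++ aw) x₀)
  have ht1 := S_bound b γ hγ φ C hC (pt b q (pt b (u ++ aw) x₀)) jj
  have ht2 := S_bound b γ hγ φ C hC (pt b q (pt b (v ++ aw) x₀)) ii
  rw [← hK] at hmid ht1 ht2
  have hgn := (hhat n hn).1
  have hgi := (hhat i hi).1
  have hgn0 := pow_pos hγ.1 (hat n)
  have hgi0 := pow_pos hγ.1 (hat i)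
  set X := pt b (u ++ aw) x₀
  set Y := pt b (v ++ aw) x₀
  set A := Sfin b γ φ x₀ (u ++ aw)
  set A' := Sfin b γ φ x₀ (v ++ aw)
  set B := Sfin b γ φ X q
  set B' := Sfin b γ φ Y q
  set T := S b γ φ (pt b q X) jj
  set T' := S b γ φ (pt b q Y) ii
  set ei := ((b : ℝ) ^ i)⁻¹ with hei
  set en := ((b : ℝ) ^ n)⁻¹ with hen
  have hei0 : 0 < ei := by positivity
  have hen0 : 0 < en := by positivity
  have hXY : |X - Y| ≤ ei / Δ₁ := by
    rw [le_div_iff₀ hΔ₁, mul_comm]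
    exact hdist
  have hmid' : |B - B'| ≤ K / Δ₁ * ei :=
    calc |B - B'| ≤ K * (ei / Δ₁) := hmid.trans (mul_le_mul_of_nonneg_left hXY hK0)
      _ = _ := by ring
  have htail : |γ ^ hat i * (T - T')| ≤ 2 * K * ei := by
    have hTT : |T - T'| ≤ 2 * K := (abs_sub _ _).trans (by linarith)
    rw [abs_mul, abs_of_pos hgi0, mul_comm (2 * K)]
    exact mul_le_mul hgi hTT (abs_nonneg _) hei0.le
  have hin : |(B - B') + γ ^ hat i * (T - T')| ≤ (K / Δ₁ + 2 * K) * ei := by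
    refine (abs_add_le _ _).trans ?_
    linarith
  have hhead' : |A - A'| ≤ b * ei * en :=
    hhead.trans (mul_le_mul_of_nonneg_left hgn (by positivity))
  have hsplit : A + γ ^ hat n * (B + γ ^ hat i * T) - (A' + γ ^ hat n * (B' + γ ^ hat i * T'))
      = (A - A') + γ ^ hat n * ((B - B') + γ ^ hat i * (T - T')) := by ring
  have hfin : |γ ^ hat n * ((B - B') + γ ^ hat i * (T - T'))| ≤ en * ((K / Δ₁ + 2 * K) * ei) := by
    rw [abs_mul, abs_of_pos hgn0]
    exact mul_le_mul hgn hin (abs_nonneg _) hen0.le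
  have hexp : ((b : ℝ) ^ (n + i))⁻¹ = en * ei := by rw [pow_add, mul_inv]
  rw [hsplit, hexp]
  refine (abs_add_le _ _).trans ?_
  calc _ ≤ b * ei * en + en * ((K / Δ₁ + 2 * K) * ei) := add_le_add hhead' hfin
    _ = _ := by ring

end
end Skew
end

section
/- Let b ≥ 2 be an integer, γ ∈ (0,1), and let φ : ℝ → ℝ be a ℤ-periodic Lipschitz function. For x ∈ [0,1], j ∈ Σ and k ∈ ℤ₊ define g_k(x,j) = −log( ν^{ℤ₊}({ j' ∈ Σ : |S(x,j') − S(x,j)| ≤ γ^k and j'₁ = j₁ }) / ν^{ℤ₊}({ j' ∈ Σ : |S(x,j') − S(x,j)| ≤ γ^k }) ). Then sup_{x ∈ [0,1]} ∫_Σ sup_{k ≥ 1} g_k(x,j) dν^{ℤ₊}(j) < ∞. -/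
/-!
The ratio inside `gk` compares two finite measures on `ℝ`: with `F = S(x,·)`, `μ = F_* ν` and
`μ_a = F_* (ν|_{j₁ = a})`, one has `gk = log (μ(B) / μ_a(B))` for `B` the closed ball of radius
`γ ^ k` about `F j` and `a = j₁`.  So `sup_k gk` is at most the logarithm of the maximal function
of `μ` relative to `μ_a`, and the Besicovitch covering theorem gives the weak-type bound
`μ_a {max > t} ≤ N / t` with `N` a universal constant (`exists_weak_type_const`).  With `t = e^n`
and a sum over the `b` digits, `ν {sup_k gk > n} ≤ b N e^{-n}` for all `n`, hence
`∫ sup_k gk dν ≤ ∑ₙ ν {sup_k gk > n} ≤ b N ∑ₙ e^{-n}`, uniformly in `x`.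

Besides the measurability of `S(x,·)`, the argument only uses that `ν` is a probability measure.
-/

open MeasureTheory Set Filter
open scoped ENNReal NNReal Topology

namespace Skew

noncomputable section

variable (b : ℕ) (γ : ℝ) (φ : ℝ → ℝ)

/-- `g_k(x,j)`: minus the log of the conditional probability, given the ball
`B(S(x,j), γ^k)` in the `S(x,·)`-image, of having the same first digit as `j`. -/
def gk (ν : Measure (ℕ → Fin b)) (x : ℝ) (j : ℕ → Fin b) (k : ℕ) : ℝ :=
  -Real.log
    ((ν {j' : ℕ → Fin b | |S b γ φ x j' - S b γ φ x j| ≤ γ ^ k ∧ j' 0 = j 0}).toReal /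
      (ν {j' : ℕ → Fin b | |S b γ φ x j' - S b γ φ x j| ≤ γ ^ k}).toReal)

/-- Weak-type maximal inequality: the Besicovitch constant `N` of the line bounds the mass of the
points `ω ∈ A` for which, at some scale `r k`, the set `A` fills at most a proportion `ε` of the
preimage of the ball about `F ω`.  The bad set need not be measurable; `ν` is then outer measure. -/
lemma exists_weak_type_const : ∃ N : ℕ, ∀ {Ω : Type} [MeasurableSpace Ω] (ν : Measure Ω)
    [IsProbabilityMeasure ν] (F : Ω → ℝ) (_ : Measurable F) (A : Set Ω) (_ : MeasurableSet A)
    (r : ℕ → ℝ) (_ : ∀ k, 0 < r k) (_ : ∀ k, r k ≤ 1) (ε : ℝ≥0∞),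
    ν {ω | ω ∈ A ∧ ∃ k, ν {ω' | |F ω' - F ω| ≤ r k ∧ ω' ∈ A} ≤
      ε * ν {ω' | |F ω' - F ω| ≤ r k}} ≤ N * ε := by
  obtain ⟨N, τ, hτ, hN⟩ := HasBesicovitchCovering.no_satelliteConfig (α := ℝ)
  refine ⟨N, ?_⟩
  intro Ω _ ν _ F hF A hA r hr0 hr1 ε
  set E := {ω | ω ∈ A ∧ ∃ k, ν {ω' | |F ω' - F ω| ≤ r k ∧ ω' ∈ A} ≤
      ε * ν {ω' | |F ω' - F ω| ≤ r k}} with hE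
  have hk : ∀ ω : E, ∃ k, ν {ω' | |F ω' - F ω| ≤ r k ∧ ω' ∈ A} ≤
      ε * ν {ω' | |F ω' - F ω| ≤ r k} := fun ω => ω.2.2
  choose k hk using hk
  let q : Besicovitch.BallPackage E ℝ :=
    { c := fun ω => F ω, r := fun ω => r (k ω), rpos := fun ω => hr0 _, r_bound := 1,
      r_le := fun ω => hr1 _ }
  obtain ⟨s, hs, hcov⟩ := Besicovitch.exist_disjoint_covering_families hτ hN q
  have hcount : ∀ i, (s i).Countable := fun i =>
    (hs i).countable_of_nonempty_interior fun ω _ =>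
      (Metric.nonempty_ball.2 (q.rpos ω)).mono Metric.ball_subset_interior_closedBall
  let P : E → Set Ω := fun ω => {ω' | |F ω' - F ω| ≤ r (k ω)}
  have hPpre : ∀ ω, P ω = F ⁻¹' Metric.closedBall (q.c ω) (q.r ω) := by
    intro ω
    ext ω'
    simp [P, q, Real.dist_eq]
  have hPmeas : ∀ ω, MeasurableSet (P ω) := by
    intro ω
    rw [hPpre]
    exact hF Metric.isClosed_closedBall.measurableSet
  have hsub : E ⊆ ⋃ i : Fin N, ⋃ ω ∈ s i, (P ω ∩ A) := by
    intro ω hω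
    have h1 := hcov (mem_range_self (⟨ω, hω⟩ : E))
    simp only [mem_iUnion] at h1 ⊢
    obtain ⟨i, ω', h', hb⟩ := h1
    refine ⟨i, ω', h', ?_, hω.1⟩
    rw [hPpre]
    exact Metric.ball_subset_closedBall hb
  have hfam : ∀ i, ν (⋃ ω ∈ s i, (P ω ∩ A)) ≤ ε := by
    intro i
    have hdisj : Pairwise (Function.onFun Disjoint fun ω : s i => P ω) := by
      intro u v huv
      have := hs i u.2 v.2 (fun h => huv (Subtype.ext h))
      simp only [Function.onFun, hPpre]
      exact Disjoint.preimage F this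
    calc ν (⋃ ω ∈ s i, (P ω ∩ A)) ≤ ∑' ω : s i, ν (P ω ∩ A) := measure_biUnion_le ν (hcount i) _
      _ ≤ ∑' ω : s i, ε * ν (P ω) := ENNReal.tsum_le_tsum fun ω => hk ω
      _ = ε * ∑' ω : s i, ν (P ω) := ENNReal.tsum_mul_left
      _ ≤ ε * ν univ := by
          gcongr
          exact tsum_measure_le_measure_univ (fun ω => (hPmeas _).nullMeasurableSet)
            (fun u v huv => (hdisj huv).aedisjoint)
      _ = ε := by simp
  calc ν E ≤ ∑ i : Fin N, ν (⋃ ω ∈ s i, (P ω ∩ A)) :=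
        (measure_mono hsub).trans (measure_iUnion_fintype_le ν _)
    _ ≤ ∑ _i : Fin N, ε := Finset.sum_le_sum fun i _ => hfam i
    _ = N * ε := by simp

lemma le_tsum_indicator_lt (a : ℝ≥0∞) :
    a ≤ ∑' n : ℕ, if (n : ℝ≥0∞) < a then 1 else 0 := by
  refine ENNReal.le_of_forall_nnreal_lt fun c hc => ?_
  calc (c : ℝ≥0∞) ≤ (⌈c⌉₊ : ℝ≥0∞) := by exact_mod_cast Nat.le_ceil c
    _ = ∑ n ∈ Finset.range ⌈c⌉₊, if (n : ℝ≥0∞) < a then 1 else 0 := by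
        rw [Finset.sum_congr rfl (g := fun _ => (1 : ℝ≥0∞))]
        · simp
        · intro n hn
          have h : (n : ℝ≥0) < c := Nat.lt_ceil.1 (Finset.mem_range.1 hn)
          exact if_pos (lt_trans (by exact_mod_cast h) hc)
    _ ≤ _ := ENNReal.sum_le_tsum _

/-- Layer-cake bound without any measurability assumption on `f`. -/
lemma lintegral_le_tsum_measure_lt {Ω : Type*} [MeasurableSpace Ω] (ν : Measure Ω)
    (f : Ω → ℝ≥0∞) : ∫⁻ ω, f ω ∂ν ≤ ∑' n : ℕ, ν {ω | (n : ℝ≥0∞) < f ω} := by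
  -- measurable hulls of the superlevel sets have the same measure and dominate `f`
  let T : ℕ → Set Ω := fun n => toMeasurable ν {ω | (n : ℝ≥0∞) < f ω}
  have hT : ∀ n, MeasurableSet (T n) := fun n => measurableSet_toMeasurable _ _
  calc ∫⁻ ω, f ω ∂ν ≤ ∫⁻ ω, ∑' n : ℕ, (T n).indicator (fun _ => (1 : ℝ≥0∞)) ω ∂ν := by
        refine lintegral_mono fun ω => (le_tsum_indicator_lt (f ω)).trans ?_
        refine ENNReal.tsum_le_tsum fun n => ?_
        split_ifs with h
        · rw [indicator_of_mem (subset_toMeasurable ν {ω | (n : ℝ≥0∞) < f ω} h)]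
        · exact zero_le
    _ = ∑' n : ℕ, ∫⁻ ω, (T n).indicator (fun _ => (1 : ℝ≥0∞)) ω ∂ν :=
        lintegral_tsum fun n => (measurable_const.indicator (hT n)).aemeasurable
    _ = ∑' n : ℕ, ν {ω | (n : ℝ≥0∞) < f ω} := by
        refine tsum_congr fun n => ?_
        rw [lintegral_indicator_const (hT n), one_mul, measure_toMeasurable]

lemma exists_bound_of_periodic {φ : ℝ → ℝ} (hper : ∀ x : ℝ, φ (x + 1) = φ x)
    (hφ : Continuous φ) : ∃ C, ∀ x, ‖φ x‖ ≤ C := by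
  obtain ⟨C, hC⟩ := (isCompact_Icc (a := (0 : ℝ)) (b := 1)).exists_bound_of_continuousOn
    hφ.continuousOn
  refine ⟨C, fun x => ?_⟩
  have hp : Function.Periodic φ 1 := hper
  obtain ⟨y, hy, hxy⟩ := hp.exists_mem_Ico₀ one_pos x
  rw [hxy]
  exact hC y ⟨hy.1, hy.2.le⟩

lemma measurable_S (b : ℕ) {γ : ℝ} (hγ : γ ∈ Ioo (0 : ℝ) 1) {φ : ℝ → ℝ}
    (hper : ∀ x : ℝ, φ (x + 1) = φ x) (hφ : Continuous φ) (x : ℝ) :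
    Measurable (S b γ φ x) := by
  obtain ⟨C, hC⟩ := exists_bound_of_periodic hper hφ
  refine Continuous.measurable ?_
  refine continuous_tsum (u := fun n => γ ^ n * C) (fun n => ?_)
    ((summable_geometric_of_lt_one hγ.1.le hγ.2).mul_right C) fun n j => ?_
  · have hsv : Continuous fun j : ℕ → Fin b => ((sval b j (n + 1) : ℕ) : ℝ) := by
      have h : Continuous fun j : ℕ → Fin b => sval b j (n + 1) :=
        continuous_finsetSum _ fun k _ =>
          ((continuous_of_discreteTopology (f := fun a : Fin b => a.val * b ^ k)).comp
            (continuous_apply k))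
      exact continuous_of_discreteTopology.comp h
    fun_prop
  · rw [norm_mul, norm_pow, Real.norm_of_nonneg hγ.1.le]
    exact mul_le_mul_of_nonneg_left (hC _) (pow_nonneg hγ.1.le n)

/-- A lower bound on `-log (p / q)` bounds `p` by a multiple of `q`; the junk values of `log` and
division at `0` do no harm, since they make the left side vanish. -/
lemma le_exp_neg_mul_of_lt_neg_log {p q : ℝ≥0∞} (hp : p ≠ ⊤) (hq : q ≠ ⊤) {t : ℝ} (ht : 0 ≤ t)
    (h : t < -Real.log (p.toReal / q.toReal)) : p ≤ ENNReal.ofReal (Real.exp (-t)) * q := by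
  have hne : p.toReal / q.toReal ≠ 0 := by
    intro h0
    rw [h0, Real.log_zero] at h
    linarith
  obtain ⟨hp0, hq0⟩ := div_ne_zero_iff.1 hne
  have hqpos : 0 < q.toReal := lt_of_le_of_ne ENNReal.toReal_nonneg hq0.symm
  have hppos : 0 < p.toReal := lt_of_le_of_ne ENNReal.toReal_nonneg hp0.symm
  have h1 : p.toReal / q.toReal < Real.exp (-t) :=
    (Real.log_lt_iff_lt_exp (div_pos hppos hqpos)).1 (by linarith)
  have h2 : p.toReal ≤ Real.exp (-t) * q.toReal := ((div_lt_iff₀ hqpos).1 h1).le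
  rw [← ENNReal.ofReal_toReal hp, ← ENNReal.ofReal_toReal hq,
    ← ENNReal.ofReal_mul (Real.exp_pos _).le]
  exact ENNReal.ofReal_le_ofReal h2

/-- The functions `sup_{k≥1} g_k(x,·)` have integrals uniformly bounded over
`x ∈ [0,1]`. -/
theorem sup_integral_gk_bounded (b : ℕ) (hb : 2 ≤ b) (γ : ℝ) (hγ : γ ∈ Ioo (0 : ℝ) 1)
    (φ : ℝ → ℝ) (hper : ∀ x : ℝ, φ (x + 1) = φ x) (K : ℝ≥0) (hlip : LipschitzWith K φ)
    (ν : Measure (ℕ → Fin b)) (hν : IsBernoulli b ν) :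
    (⨆ x ∈ Icc (0 : ℝ) 1,
        ∫⁻ j, ⨆ k : ℕ, ENNReal.ofReal (gk b γ φ ν x j (k + 1)) ∂ν) < ⊤ := by
  obtain ⟨N, hN⟩ := exists_weak_type_const
  have := hν.1
  set B : ℝ≥0∞ := ∑' n : ℕ, (b : ℝ≥0∞) * (N * ENNReal.ofReal (Real.exp (-(n : ℝ)))) with hB
  have hBtop : B < ⊤ := by
    rw [hB, ENNReal.tsum_mul_left, ENNReal.tsum_mul_left]
    exact ENNReal.mul_lt_top (ENNReal.natCast_lt_top b)
      (ENNReal.mul_lt_top (ENNReal.natCast_lt_top N) Real.summable_exp_neg_nat.tsum_ofReal_lt_top)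
  refine lt_of_le_of_lt (iSup₂_le fun x _ => ?_) hBtop
  refine (lintegral_le_tsum_measure_lt ν _).trans (ENNReal.tsum_le_tsum fun n => ?_)
  set E : Fin b → Set (ℕ → Fin b) := fun a => {j | j ∈ {j : ℕ → Fin b | j 0 = a} ∧
    ∃ k : ℕ, ν {j' | |S b γ φ x j' - S b γ φ x j| ≤ γ ^ (k + 1) ∧ j' ∈ {j : ℕ → Fin b | j 0 = a}} ≤
      ENNReal.ofReal (Real.exp (-(n : ℝ))) *
        ν {j' | |S b γ φ x j' - S b γ φ x j| ≤ γ ^ (k + 1)}} with hE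
  have hsub : {j | (n : ℝ≥0∞) < ⨆ k : ℕ, ENNReal.ofReal (gk b γ φ ν x j (k + 1))} ⊆
      ⋃ a : Fin b, E a := by
    intro j hj
    obtain ⟨k, hk⟩ := lt_iSup_iff.1 (Set.mem_ofPred_eq ▸ hj)
    have hk' : (n : ℝ) < gk b γ φ ν x j (k + 1) := by
      rw [← ENNReal.ofReal_natCast] at hk
      exact (ENNReal.ofReal_lt_ofReal_iff_of_nonneg (Nat.cast_nonneg n)).1 hk
    refine mem_iUnion.2 ⟨j 0, rfl, k, ?_⟩
    exact le_exp_neg_mul_of_lt_neg_log (measure_ne_top ν _) (measure_ne_top ν _)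
      (Nat.cast_nonneg n) hk'
  have hEa : ∀ a, ν (E a) ≤ N * ENNReal.ofReal (Real.exp (-(n : ℝ))) := fun a =>
    hN ν (S b γ φ x) (measurable_S b hγ hper hlip.continuous x) {j | j 0 = a}
      (measurableSet_eq_fun (measurable_pi_apply 0) measurable_const) (fun k => γ ^ (k + 1))
      (fun k => pow_pos hγ.1 _) (fun k => pow_le_one₀ hγ.1.le hγ.2.le) _
  calc _ ≤ ∑ a : Fin b, ν (E a) := (measure_mono hsub).trans (measure_iUnion_fintype_le ν _)
    _ ≤ ∑ _a : Fin b, N * ENNReal.ofReal (Real.exp (-(n : ℝ))) :=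
        Finset.sum_le_sum fun a _ => hEa a
    _ = _ := by simp

end
end Skew
end
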